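/- Let f : ℝ² → ℝ² be a C^∞ map with f(0)=0 which has corank one at 0, let λ be its Jacobian determinant, and let η be any null vector field for f. Then j⁴f(0) is A⁴-equivalent to the 4-jet at 0 of (x,y) ↦ (x, x²y + xy³) or to the 4-jet at 0 of (x,y) ↦ (x, x²y) if and only if dλ(0) = 0, the Hessian matrix H_λ(0) has rank 1, and (η²λ)(0) = (η³λ)(0) = 0. -/

import Mathlib

open Filter Topology

noncomputable section

/-- Directional derivative of a scalar function. -/
def dop (v : ℝ × ℝ) (g : ℝ × ℝ → ℝ) : ℝ × ℝ → ℝ :=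
  fun p => fderiv ℝ g p v

/-- Partial derivative operator in the first coordinate. -/
def pdx : (ℝ × ℝ → ℝ) → ℝ × ℝ → ℝ := dop (1, 0)

/-- Partial derivative operator in the second coordinate. -/
def pdy : (ℝ × ℝ → ℝ) → ℝ × ℝ → ℝ := dop (0, 1)

/-- Taylor coefficient `a_{ij} = ∂_x^i ∂_y^j g(0,0) / (i! j!)` of `g` at the origin. -/
def tcoeff (g : ℝ × ℝ → ℝ) (i j : ℕ) : ℝ :=
  (pdx^[i] (pdy^[j] g)) 0 / (Nat.factorial i * Nat.factorial j)

/-- The Jacobian determinant `λ_f` of a map `f : ℝ² → ℝ²`. -/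
def jacDet (f : ℝ × ℝ → ℝ × ℝ) (p : ℝ × ℝ) : ℝ :=
  (fderiv ℝ f p (1, 0)).1 * (fderiv ℝ f p (0, 1)).2 -
    (fderiv ℝ f p (1, 0)).2 * (fderiv ℝ f p (0, 1)).1

/-- `f` has corank one at `0` : the derivative of `f` at `0` has rank one. -/
def CorankOne (f : ℝ × ℝ → ℝ × ℝ) : Prop :=
  LinearMap.rank ((fderiv ℝ f 0).toLinearMap) = 1

/-- `η` is a null vector field for `f` near `0`. -/
def IsNullVF (f η : ℝ × ℝ → ℝ × ℝ) : Prop :=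
  η 0 ≠ 0 ∧ ∃ U ∈ 𝓝 (0 : ℝ × ℝ),
    ContDiffOn ℝ (⊤ : ℕ∞) η U ∧ ∀ p ∈ U, jacDet f p = 0 → fderiv ℝ f p (η p) = 0

/-- The derivative `(ηg)(p) = Dg(p)(η(p))` of `g` along the vector field `η`. -/
def etaD (η : ℝ × ℝ → ℝ × ℝ) (g : ℝ × ℝ → ℝ) : ℝ × ℝ → ℝ :=
  fun p => fderiv ℝ g p (η p)

/-- The iterated derivative `η^k g` along the vector field `η`. -/
def etaIter (η : ℝ × ℝ → ℝ × ℝ) : ℕ → (ℝ × ℝ → ℝ) → ℝ × ℝ → ℝ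
  | 0, g => g
  | k + 1, g => etaD η (etaIter η k g)

/-- The Hessian matrix of second partial derivatives of `g` at `0`. -/
def hess (g : ℝ × ℝ → ℝ) : Matrix (Fin 2) (Fin 2) ℝ :=
  !![pdx (pdx g) 0, pdx (pdy g) 0; pdy (pdx g) 0, pdy (pdy g) 0]

/-- `A^r`-equivalence of the `r`-jets at `0` of two map-germs `(ℝ²,0) → (ℝ²,0)`. -/
def JetEquiv (r : ℕ) (f g : ℝ × ℝ → ℝ × ℝ) : Prop :=
  ∃ φ ψ : ℝ × ℝ → ℝ × ℝ,
    ContDiff ℝ (⊤ : ℕ∞) φ ∧ ContDiff ℝ (⊤ : ℕ∞) ψ ∧ φ 0 = 0 ∧ ψ 0 = 0 ∧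
    Function.Bijective (⇑(fderiv ℝ φ 0)) ∧ Function.Bijective (⇑(fderiv ℝ ψ 0)) ∧
    ∀ i ≤ r, iteratedFDeriv ℝ i (ψ ∘ f ∘ φ) 0 = iteratedFDeriv ℝ i g 0

/-- `A`-equivalence of two map-germs `(ℝ²,0) → (ℝ²,0)`. -/
def AEquiv (f g : ℝ × ℝ → ℝ × ℝ) : Prop :=
  ∃ φ ψ : ℝ × ℝ → ℝ × ℝ,
    ContDiff ℝ (⊤ : ℕ∞) φ ∧ ContDiff ℝ (⊤ : ℕ∞) ψ ∧ φ 0 = 0 ∧ ψ 0 = 0 ∧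
    Function.Bijective (⇑(fderiv ℝ φ 0)) ∧ Function.Bijective (⇑(fderiv ℝ ψ 0)) ∧
    ∀ᶠ p in 𝓝 (0 : ℝ × ℝ), ψ (f (φ p)) = g p

/-- `f` has the form `(x, g(x,y))` where `g` is `C^∞` and the Taylor coefficients of `g`
of total degree `< N` at the origin are prescribed by `P`. -/
def HasForm (f : ℝ × ℝ → ℝ × ℝ) (g : ℝ × ℝ → ℝ) (N : ℕ) (P : ℕ → ℕ → ℝ) : Prop :=
  ContDiff ℝ (⊤ : ℕ∞) g ∧ (∀ p, f p = (p.1, g p)) ∧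
    ∀ i j, i + j < N → tcoeff g i j = P i j

/-- Smooth scalar functions. -/
abbrev Sm (h : ℝ × ℝ → ℝ) : Prop := ContDiff ℝ (⊤ : ℕ∞) h

/-- Smooth functions vanishing to order `n` at the origin. -/
def Vn (n : ℕ) (h : ℝ × ℝ → ℝ) : Prop :=
  Sm h ∧ ∀ i < n, iteratedFDeriv ℝ i h 0 = 0

lemma nat_le_top (n : ℕ) : (n : WithTop ℕ∞) ≤ ((⊤ : ℕ∞) : WithTop ℕ∞) := by
  exact_mod_cast le_top

lemma Sm.atn {h : ℝ × ℝ → ℝ} (hh : Sm h) (n : ℕ) : ContDiffAt ℝ n h 0 :=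
  (hh.of_le (nat_le_top n)).contDiffAt

lemma Sm.diff {h : ℝ × ℝ → ℝ} (hh : Sm h) : Differentiable ℝ h :=
  hh.differentiable (by simp)

lemma Vn.mono {n m : ℕ} {h : ℝ × ℝ → ℝ} (hv : Vn n h) (hm : m ≤ n) : Vn m h :=
  ⟨hv.1, fun i hi => hv.2 i (by omega)⟩

lemma Vn.zero {h : ℝ × ℝ → ℝ} (hv : Sm h) : Vn 0 h := ⟨hv, fun i hi => by omega⟩

lemma Vn.add {n : ℕ} {h k : ℝ × ℝ → ℝ} (hh : Vn n h) (hk : Vn n k) :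
    Vn n (fun p => h p + k p) := by
  refine ⟨hh.1.add hk.1, fun i hi => ?_⟩
  have := iteratedFDeriv_add_apply (hh.1.atn i) (hk.1.atn i)
  rw [hh.2 i hi, hk.2 i hi, add_zero] at this
  exact this

lemma Vn.sub {n : ℕ} {h k : ℝ × ℝ → ℝ} (hh : Vn n h) (hk : Vn n k) :
    Vn n (fun p => h p - k p) := by
  refine ⟨hh.1.sub hk.1, fun i hi => ?_⟩
  have := iteratedFDeriv_sub_apply (hh.1.atn i) (hk.1.atn i)
  rw [hh.2 i hi, hk.2 i hi, sub_zero] at this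
  exact this

lemma Vn.mul {n m : ℕ} {h k : ℝ × ℝ → ℝ} (hh : Vn n h) (hk : Vn m k) :
    Vn (n + m) (fun p => h p * k p) := by
  refine ⟨hh.1.mul hk.1, fun i hi => ?_⟩
  have := norm_iteratedFDeriv_mul_le hh.1 hk.1 0 (n := i) (nat_le_top i)
  rw [Finset.sum_eq_zero] at this
  · exact norm_le_zero_iff.1 this
  · intro j hj
    rw [Finset.mem_range] at hj
    by_cases hjn : j < n
    · rw [hh.2 j hjn]; simp
    · rw [hk.2 (i - j) (by omega)]; simp

/-- multiplication by a smooth function -/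
lemma Vn.smul {n : ℕ} {h k : ℝ × ℝ → ℝ} (hh : Sm h) (hk : Vn n k) :
    Vn n (fun p => h p * k p) := by
  simpa using (Vn.zero hh).mul hk

lemma Vn.cmul {n : ℕ} {k : ℝ × ℝ → ℝ} (c : ℝ) (hk : Vn n k) :
    Vn n (fun p => c * k p) := Vn.smul contDiff_const hk

lemma Vn.comp {n : ℕ} {h : ℝ × ℝ → ℝ} (hh : Vn n h) {φ : ℝ × ℝ → ℝ × ℝ}
    (hφ : ContDiff ℝ (⊤ : ℕ∞) φ) (h0 : φ 0 = 0) : Vn n (fun p => h (φ p)) := by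
  refine ⟨hh.1.comp hφ, fun i hi => ?_⟩
  have := norm_iteratedFDeriv_comp_le hh.1 hφ (nat_le_top i) 0 (C := 0)
    (D := 1 + ∑ j ∈ Finset.range (i + 1), ‖iteratedFDeriv ℝ j φ 0‖) ?_ ?_
  · simp only [mul_zero, zero_mul] at this
    exact norm_le_zero_iff.1 this
  · intro j hj
    rw [h0, hh.2 j (by omega)]; simp
  · intro j h1 hj
    have hs : ‖iteratedFDeriv ℝ j φ 0‖ ≤ ∑ j ∈ Finset.range (i + 1), ‖iteratedFDeriv ℝ j φ 0‖ :=
      Finset.single_le_sum (f := fun j => ‖iteratedFDeriv ℝ j φ 0‖) (fun _ _ => norm_nonneg _)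
        (Finset.mem_range.2 (by omega))
    have h0 : 0 ≤ ∑ j ∈ Finset.range (i + 1), ‖iteratedFDeriv ℝ j φ 0‖ :=
      Finset.sum_nonneg (fun _ _ => norm_nonneg _)
    calc _ ≤ 1 + ∑ j ∈ Finset.range (i + 1), ‖iteratedFDeriv ℝ j φ 0‖ := by linarith
      _ ≤ _ := le_self_pow₀ (by linarith) (by omega)

lemma Vn.congr {n : ℕ} {h k : ℝ × ℝ → ℝ} (hh : Vn n h) (hk : Sm k) (e : k =ᶠ[𝓝 0] h) :
    Vn n k := ⟨hk, fun i hi => by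
      rw [← hh.2 i hi]; exact (e.iteratedFDeriv ℝ i).self_of_nhds⟩

lemma Vn.eq {n : ℕ} {h k : ℝ × ℝ → ℝ} (hh : Vn n h) (e : ∀ p, k p = h p) :
    Vn n k := by
  have : k = h := funext e
  rwa [this]

lemma Vn.at_zero {n : ℕ} {h : ℝ × ℝ → ℝ} (hh : Vn (n + 1) h) : h 0 = 0 := by
  have := hh.2 0 (by omega)
  have h2 := congrArg (fun m => m 0) this
  simpa using h2

lemma Sm.dop {h : ℝ × ℝ → ℝ} (hh : Sm h) (v : ℝ × ℝ) : Sm (dop v h) := by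
  have : ContDiff ℝ (⊤ : ℕ∞) (fderiv ℝ h) := hh.fderiv_right (by simp)
  exact this.clm_apply contDiff_const

lemma Vn.dop {n : ℕ} {h : ℝ × ℝ → ℝ} (hh : Vn (n + 1) h) (v : ℝ × ℝ) : Vn n (dop v h) := by
  refine ⟨hh.1.dop v, fun i hi => ?_⟩
  have h1 : ContDiff ℝ (⊤ : ℕ∞) (fderiv ℝ h) := hh.1.fderiv_right (by simp)
  have h2 : iteratedFDeriv ℝ i (fderiv ℝ h) 0 = 0 := by
    rw [← norm_eq_zero, norm_iteratedFDeriv_fderiv, hh.2 _ (by omega), norm_zero]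
  have h3 := (ContinuousLinearMap.apply ℝ ℝ v).iteratedFDeriv_comp_left
    (h1.contDiffAt (x := 0)) (nat_le_top i)
  rw [h2] at h3
  have h4 : _root_.dop v h = (ContinuousLinearMap.apply ℝ ℝ v) ∘ (fderiv ℝ h) := rfl
  rw [h4, h3]
  ext m; simp

lemma fderiv_split {h : ℝ × ℝ → ℝ} (p w : ℝ × ℝ) :
    fderiv ℝ h p w = w.1 * dop (1, 0) h p + w.2 * dop (0, 1) h p := by
  have : w = w.1 • ((1, 0) : ℝ × ℝ) + w.2 • ((0, 1) : ℝ × ℝ) := by ext <;> simp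
  conv_lhs => rw [this, map_add, map_smul, map_smul]
  rfl

lemma Vn.succ {n : ℕ} {h : ℝ × ℝ → ℝ} (hs : Sm h) (h0 : h 0 = 0)
    (hx : Vn n (_root_.dop (1, 0) h)) (hy : Vn n (_root_.dop (0, 1) h)) : Vn (n + 1) h := by
  refine ⟨hs, fun i hi => ?_⟩
  cases i with
  | zero => ext m; simpa using h0
  | succ i =>
    rw [← norm_eq_zero, ← norm_iteratedFDeriv_fderiv, norm_eq_zero]
    let L1 : ℝ →L[ℝ] (ℝ × ℝ →L[ℝ] ℝ) :=
      ContinuousLinearMap.smulRightL ℝ (ℝ × ℝ) ℝ (ContinuousLinearMap.fst ℝ ℝ ℝ)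
    let L2 : ℝ →L[ℝ] (ℝ × ℝ →L[ℝ] ℝ) :=
      ContinuousLinearMap.smulRightL ℝ (ℝ × ℝ) ℝ (ContinuousLinearMap.snd ℝ ℝ ℝ)
    have e : fderiv ℝ h = (L1 ∘ _root_.dop (1, 0) h) + (L2 ∘ _root_.dop (0, 1) h) := by
      funext p
      ext
      · simp [L1, L2, _root_.dop]
      · simp [L1, L2, _root_.dop]
    have c1 := L1.iteratedFDeriv_comp_left (hx.1.atn i) le_rfl
    have c2 := L2.iteratedFDeriv_comp_left (hy.1.atn i) le_rfl
    rw [hx.2 i (by omega)] at c1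
    rw [hy.2 i (by omega)] at c2
    have c3 := iteratedFDeriv_add_apply (i := i) (x := (0 : ℝ × ℝ))
      (L1.contDiff.contDiffAt.comp 0 (hx.1.atn i))
      (L2.contDiff.contDiffAt.comp 0 (hy.1.atn i))
    rw [e, c3, c1, c2]
    ext m <;> simp

lemma Vn.one {h : ℝ × ℝ → ℝ} (hs : Sm h) (h0 : h 0 = 0) : Vn 1 h :=
  Vn.succ hs h0 (Vn.zero (hs.dop _)) (Vn.zero (hs.dop _))

lemma Vn.two {h : ℝ × ℝ → ℝ} (hs : Sm h) (h0 : h 0 = 0) (h1 : fderiv ℝ h 0 = 0) : Vn 2 h :=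
  Vn.succ hs h0 (Vn.one (hs.dop _) (by simp [_root_.dop, h1]))
    (Vn.one (hs.dop _) (by simp [_root_.dop, h1]))

lemma dop_add {h k : ℝ × ℝ → ℝ} (hh : Sm h) (hk : Sm k) (v : ℝ × ℝ) :
    dop v (fun p => h p + k p) = fun p => dop v h p + dop v k p := by
  funext p
  simp [dop, fderiv_fun_add (hh.diff p) (hk.diff p)]

lemma dop_sub {h k : ℝ × ℝ → ℝ} (hh : Sm h) (hk : Sm k) (v : ℝ × ℝ) :
    dop v (fun p => h p - k p) = fun p => dop v h p - dop v k p := by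
  funext p
  simp [dop, fderiv_fun_sub (hh.diff p) (hk.diff p)]

lemma dop_mul {h k : ℝ × ℝ → ℝ} (hh : Sm h) (hk : Sm k) (v : ℝ × ℝ) :
    dop v (fun p => h p * k p) = fun p => dop v h p * k p + h p * dop v k p := by
  funext p
  simp [dop, fderiv_fun_mul (hh.diff p) (hk.diff p)]
  ring

lemma dop_const (c : ℝ) (v : ℝ × ℝ) : dop v (fun _ => c) = fun _ => 0 := by
  funext p; simp [dop]

lemma dop_clm (l : ℝ × ℝ →L[ℝ] ℝ) (v : ℝ × ℝ) : dop v (fun p => l p) = fun _ => l v := by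
  funext p; simp [dop]

lemma dop_fst (v : ℝ × ℝ) : dop v (fun p => p.1) = fun _ => v.1 :=
  dop_clm (ContinuousLinearMap.fst ℝ ℝ ℝ) v

lemma dop_snd (v : ℝ × ℝ) : dop v (fun p => p.2) = fun _ => v.2 :=
  dop_clm (ContinuousLinearMap.snd ℝ ℝ ℝ) v

lemma dop_comm {h : ℝ × ℝ → ℝ} (hh : Sm h) (u v : ℝ × ℝ) : dop u (dop v h) = dop v (dop u h) := by
  funext p
  have hs : IsSymmSndFDerivAt ℝ h p := (hh.contDiffAt (x := p)).isSymmSndFDerivAt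
    (by rw [minSmoothness_of_isRCLikeNormedField]; exact nat_le_top 2)
  have h1 : ContDiff ℝ (⊤ : ℕ∞) (fderiv ℝ h) := hh.fderiv_right (by simp)
  have key : ∀ u v : ℝ × ℝ, dop u (dop v h) p = fderiv ℝ (fderiv ℝ h) p u v := by
    intro u v
    have hd : DifferentiableAt ℝ (fderiv ℝ h) p := (h1.differentiable (by simp)) p
    show fderiv ℝ (fun q => fderiv ℝ h q v) p u = _
    rw [fderiv_clm_apply hd (differentiableAt_const v)]
    simp
  rw [key, key]
  exact hs u v

lemma sm_fst : Sm (fun p => p.1) := contDiff_fst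
lemma sm_snd : Sm (fun p => p.2) := contDiff_snd
lemma sm_const (c : ℝ) : Sm (fun _ => c) := contDiff_const
lemma sm_clm (l : ℝ × ℝ →L[ℝ] ℝ) : Sm (fun p => l p) := l.contDiff

lemma vn_fst : Vn 1 (fun p => p.1) := Vn.one sm_fst rfl
lemma vn_snd : Vn 1 (fun p => p.2) := Vn.one sm_snd rfl
lemma vn_clm (l : ℝ × ℝ →L[ℝ] ℝ) : Vn 1 (fun p => l p) := Vn.one (sm_clm l) (by simp)

lemma euler_aux (n : ℕ) : ∀ {h : ℝ × ℝ → ℝ}, Vn n h →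
    Vn (n + 1) (fun p => (p.1 * dop (1, 0) h p + p.2 * dop (0, 1) h p) - (n : ℝ) * h p) := by
  induction n with
  | zero =>
    intro h hh
    refine Vn.one ?_ (by simp)
    exact ((sm_fst.mul (hh.1.dop _)).add (sm_snd.mul (hh.1.dop _))).sub ((sm_const _).mul hh.1)
  | succ n ih =>
    intro h hh
    have s1 := sm_fst.mul (hh.1.dop (1, 0))
    have s2 := sm_snd.mul (hh.1.dop (0, 1))
    have s3 := (sm_const ((n + 1 : ℕ) : ℝ)).mul hh.1
    refine Vn.succ ((s1.add s2).sub s3) (by simp [hh.at_zero]) ?_ ?_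
    · refine (ih (hh.dop (1, 0))).eq ?_
      intro p
      rw [dop_sub (s1.add s2) s3, dop_add s1 s2, dop_mul sm_fst (hh.1.dop _),
        dop_mul sm_snd (hh.1.dop _), dop_mul (sm_const _) hh.1, dop_fst, dop_snd, dop_const,
        dop_comm hh.1 (1, 0) (0, 1)]
      push_cast
      ring
    · refine (ih (hh.dop (0, 1))).eq ?_
      intro p
      rw [dop_sub (s1.add s2) s3, dop_add s1 s2, dop_mul sm_fst (hh.1.dop _),
        dop_mul sm_snd (hh.1.dop _), dop_mul (sm_const _) hh.1, dop_fst, dop_snd, dop_const,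
        dop_comm hh.1 (1, 0) (0, 1)]
      push_cast
      ring

/-- The Euler relation in a basis `w, v` with dual basis `l, m`. -/
lemma euler {n : ℕ} {h : ℝ × ℝ → ℝ} (hh : Vn n h) {l m : ℝ × ℝ →L[ℝ] ℝ} {w v : ℝ × ℝ}
    (hb : ∀ p, p = l p • w + m p • v) :
    Vn (n + 1) (fun p => (l p * dop w h p + m p * dop v h p) - (n : ℝ) * h p) := by
  refine (euler_aux n hh).eq fun p => ?_
  rw [← fderiv_split]
  conv_rhs => enter [1, 2]; rw [hb p]
  simp [dop]

lemma taylor0 {h : ℝ × ℝ → ℝ} (hh : Sm h) : ∃ a : ℝ, Vn 1 (fun p => h p - a) :=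
  ⟨h 0, Vn.one (hh.sub contDiff_const) (by simp)⟩

lemma taylor1 {h : ℝ × ℝ → ℝ} (hh : Vn 1 h) {l m : ℝ × ℝ →L[ℝ] ℝ} {w v : ℝ × ℝ}
    (hb : ∀ p, p = l p • w + m p • v) : ∃ a b : ℝ, Vn 2 (fun p => h p - (a * l p + b * m p)) := by
  obtain ⟨a, ha⟩ := taylor0 (hh.1.dop w)
  obtain ⟨b, hb'⟩ := taylor0 (hh.1.dop v)
  refine ⟨a, b, ?_⟩
  refine ((((vn_clm l).mul ha).add ((vn_clm m).mul hb')).sub (euler hh hb)).eq fun p => ?_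
  push_cast; ring

lemma taylor2 {h : ℝ × ℝ → ℝ} (hh : Vn 2 h) {l m : ℝ × ℝ →L[ℝ] ℝ} {w v : ℝ × ℝ}
    (hb : ∀ p, p = l p • w + m p • v) :
    ∃ a b c : ℝ, Vn 3 (fun p => h p - (a * l p ^ 2 + b * (l p * m p) + c * m p ^ 2)) := by
  obtain ⟨a, b, ha⟩ := taylor1 (hh.dop w) hb
  obtain ⟨c, d, hc⟩ := taylor1 (hh.dop v) hb
  refine ⟨a / 2, (b + c) / 2, d / 2, ?_⟩
  refine (((((vn_clm l).mul ha).add ((vn_clm m).mul hc)).sub (euler hh hb)).cmul (1 / 2)).eq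
    fun p => ?_
  push_cast; ring

lemma taylor3 {h : ℝ × ℝ → ℝ} (hh : Vn 3 h) {l m : ℝ × ℝ →L[ℝ] ℝ} {w v : ℝ × ℝ}
    (hb : ∀ p, p = l p • w + m p • v) :
    ∃ a b c d : ℝ, Vn 4 (fun p => h p -
      (l p * (a * l p ^ 2 + b * (l p * m p) + c * m p ^ 2) + d * (m p * (m p * m p)))) := by
  obtain ⟨a, b, c, ha⟩ := taylor2 (hh.dop w) hb
  obtain ⟨a', b', c', hc⟩ := taylor2 (hh.dop v) hb
  refine ⟨a / 3, (b + a') / 3, (c + b') / 3, c' / 3, ?_⟩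
  refine (((((vn_clm l).mul ha).add ((vn_clm m).mul hc)).sub (euler hh hb)).cmul (1 / 3)).eq
    fun p => ?_
  push_cast; ring

/-- Integration in the `y` direction. -/
lemma integ (n : ℕ) : ∀ {h : ℝ × ℝ → ℝ}, Sm h → (∀ x, h (x, 0) = 0) → Vn n (dop (0, 1) h) →
    Vn (n + 1) h := by
  induction n with
  | zero => intro h hs h0 _; exact Vn.one hs (h0 0)
  | succ n ih =>
    intro h hs h0 hy
    refine Vn.succ hs (h0 0) (ih (hs.dop _) (fun x => ?_) ?_) hy
    · have h1 : HasFDerivAt h (fderiv ℝ h (x, 0)) (x, 0) := (hs.diff _).hasFDerivAt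
      have h2 : HasDerivAt (fun t : ℝ => ((t, 0) : ℝ × ℝ)) (1, 0) x :=
        (hasDerivAt_id x).prodMk (hasDerivAt_const x (0 : ℝ))
      have h3 := h1.comp_hasDerivAt x h2
      have h4 : (h ∘ fun t : ℝ => ((t, 0) : ℝ × ℝ)) = fun _ => 0 := by funext t; simp [h0]
      rw [h4] at h3
      exact h3.unique (hasDerivAt_const x (0 : ℝ))
    · rw [dop_comm hs]
      exact hy.dop _

/-! ### Derivatives along a vector field -/

lemma Sm.etaD {η : ℝ × ℝ → ℝ × ℝ} (hη : ContDiff ℝ (⊤ : ℕ∞) η) {h : ℝ × ℝ → ℝ} (hh : Sm h) :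
    Sm (etaD η h) := by
  have : ContDiff ℝ (⊤ : ℕ∞) (fderiv ℝ h) := hh.fderiv_right (by simp)
  exact this.clm_apply hη

lemma Vn.etaD {η : ℝ × ℝ → ℝ × ℝ} (hη : ContDiff ℝ (⊤ : ℕ∞) η) {n : ℕ} {h : ℝ × ℝ → ℝ}
    (hh : Vn (n + 1) h) : Vn n (etaD η h) := by
  refine ((Vn.smul hη.fst (hh.dop (1, 0))).add (Vn.smul hη.snd (hh.dop (0, 1)))).eq fun p => ?_
  exact fderiv_split p (η p)

lemma etaD_add (η : ℝ × ℝ → ℝ × ℝ) {h k : ℝ × ℝ → ℝ} (hh : Sm h) (hk : Sm k) :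
    etaD η (fun p => h p + k p) = fun p => etaD η h p + etaD η k p := by
  funext p
  simp [etaD, fderiv_fun_add (hh.diff p) (hk.diff p)]

lemma etaD_mul (η : ℝ × ℝ → ℝ × ℝ) {h k : ℝ × ℝ → ℝ} (hh : Sm h) (hk : Sm k) :
    etaD η (fun p => h p * k p) = fun p => etaD η h p * k p + h p * etaD η k p := by
  funext p
  simp [etaD, fderiv_fun_mul (hh.diff p) (hk.diff p)]
  ring

lemma etaD_cmul (η : ℝ × ℝ → ℝ × ℝ) {k : ℝ × ℝ → ℝ} (c : ℝ) (hk : Sm k) :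
    etaD η (fun p => c * k p) = fun p => c * etaD η k p := by
  funext p
  simp [etaD, fderiv_const_mul (hk.diff p)]

lemma etaD_congr {η η' : ℝ × ℝ → ℝ × ℝ} {h k : ℝ × ℝ → ℝ} (e : η =ᶠ[𝓝 0] η')
    (e' : h =ᶠ[𝓝 0] k) : etaD η h =ᶠ[𝓝 0] etaD η' k := by
  filter_upwards [e, e'.fderiv (𝕜 := ℝ)] with p h1 h2
  simp [etaD, h1, h2]

lemma etaIter_congr {η η' : ℝ × ℝ → ℝ × ℝ} (h : ℝ × ℝ → ℝ) (e : η =ᶠ[𝓝 0] η') (n : ℕ) :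
    etaIter η n h =ᶠ[𝓝 0] etaIter η' n h := by
  induction n with
  | zero => exact EventuallyEq.rfl
  | succ n ih => exact etaD_congr e ih

section eta
variable {η : ℝ × ℝ → ℝ × ℝ} (hη : ContDiff ℝ (⊤ : ℕ∞) η)

lemma eta1_clm (l : ℝ × ℝ →L[ℝ] ℝ) : etaIter η 1 (fun p => l p) 0 = l (η 0) := by
  simp [etaIter, etaD]

lemma eta1_mul {h k : ℝ × ℝ → ℝ} (hh : Sm h) (hk : Sm k) :
    etaIter η 1 (fun p => h p * k p) 0 = etaIter η 1 h 0 * k 0 + h 0 * etaIter η 1 k 0 := by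
  simp only [etaIter]
  rw [etaD_mul η hh hk]

lemma eta2_mul (hη : ContDiff ℝ (⊤ : ℕ∞) η) {h k : ℝ × ℝ → ℝ} (hh : Sm h) (hk : Sm k) :
    etaIter η 2 (fun p => h p * k p) 0 = etaIter η 2 h 0 * k 0 +
      2 * etaIter η 1 h 0 * etaIter η 1 k 0 + h 0 * etaIter η 2 k 0 := by
  simp only [etaIter]
  have h1 := hh.etaD hη
  have k1 := hk.etaD hη
  rw [etaD_mul η hh hk, etaD_add η (h1.mul hk) (hh.mul k1), etaD_mul η h1 hk, etaD_mul η hh k1]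
  ring

lemma eta3_mul (hη : ContDiff ℝ (⊤ : ℕ∞) η) {h k : ℝ × ℝ → ℝ} (hh : Sm h) (hk : Sm k) :
    etaIter η 3 (fun p => h p * k p) 0 = etaIter η 3 h 0 * k 0 +
      3 * etaIter η 2 h 0 * etaIter η 1 k 0 + 3 * etaIter η 1 h 0 * etaIter η 2 k 0 +
      h 0 * etaIter η 3 k 0 := by
  simp only [etaIter]
  have h1 := hh.etaD hη
  have k1 := hk.etaD hη
  have h2 := h1.etaD hη
  have k2 := k1.etaD hη
  rw [etaD_mul η hh hk, etaD_add η (h1.mul hk) (hh.mul k1), etaD_mul η h1 hk, etaD_mul η hh k1,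
    etaD_add η ((h2.mul hk).add (h1.mul k1)) ((h1.mul k1).add (hh.mul k2)),
    etaD_add η (h2.mul hk) (h1.mul k1), etaD_add η (h1.mul k1) (hh.mul k2),
    etaD_mul η h2 hk, etaD_mul η h1 k1, etaD_mul η hh k2]
  ring

lemma Sm.etaIter (hη : ContDiff ℝ (⊤ : ℕ∞) η) {h : ℝ × ℝ → ℝ} (hh : Sm h) (n : ℕ) :
    Sm (etaIter η n h) := by
  induction n with
  | zero => exact hh
  | succ n ih => exact ih.etaD hη

lemma etaIter_add (hη : ContDiff ℝ (⊤ : ℕ∞) η) {h k : ℝ × ℝ → ℝ} (hh : Sm h) (hk : Sm k) (n : ℕ) :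
    etaIter η n (fun p => h p + k p) = fun p => etaIter η n h p + etaIter η n k p := by
  induction n with
  | zero => rfl
  | succ n ih =>
    simp only [etaIter]
    rw [ih, etaD_add η (hh.etaIter hη n) (hk.etaIter hη n)]

lemma etaIter_add_at (hη : ContDiff ℝ (⊤ : ℕ∞) η) {h k : ℝ × ℝ → ℝ} (hh : Sm h) (hk : Sm k)
    (n : ℕ) : etaIter η n (fun p => h p + k p) 0 = etaIter η n h 0 + etaIter η n k 0 := by
  rw [etaIter_add hη hh hk]

lemma etaIter_cmul (hη : ContDiff ℝ (⊤ : ℕ∞) η) {k : ℝ × ℝ → ℝ} (c : ℝ) (hk : Sm k) (n : ℕ) :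
    etaIter η n (fun p => c * k p) = fun p => c * etaIter η n k p := by
  induction n with
  | zero => rfl
  | succ n ih =>
    simp only [etaIter]
    rw [ih, etaD_cmul η c (hk.etaIter hη n)]

lemma Vn.etaIter (hη : ContDiff ℝ (⊤ : ℕ∞) η) (n : ℕ) : ∀ {m : ℕ} {h : ℝ × ℝ → ℝ},
    Vn (n + m) h → Vn m (etaIter η n h) := by
  induction n with
  | zero => intro m h hh; rw [Nat.zero_add] at hh; exact hh
  | succ n ih =>
    intro m h hh
    exact Vn.etaD hη (ih (m := m + 1) (by convert hh using 1; omega))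

end eta

/-! ### The intrinsic condition -/

/-- `g` has, modulo order four, the form `c l² + l q`, with `l` a linear form killing `v`. -/
def Cond (g : ℝ × ℝ → ℝ) (v : ℝ × ℝ) : Prop :=
  ∃ (l : ℝ × ℝ →L[ℝ] ℝ) (c : ℝ) (q : ℝ × ℝ → ℝ), l v = 0 ∧ l ≠ 0 ∧ c ≠ 0 ∧ Vn 2 q ∧
    Vn 4 (fun p => g p - l p * (c * l p + q p))

lemma Cond.vmul {g : ℝ × ℝ → ℝ} {v : ℝ × ℝ} (t : ℝ) (h : Cond g v) : Cond g (t • v) := by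
  obtain ⟨l, c, q, h1, h⟩ := h
  exact ⟨l, c, q, by simp [h1], h⟩

lemma Cond.of_sub {g k : ℝ × ℝ → ℝ} {v : ℝ × ℝ} (h : Cond g v) (hk : Vn 4 (fun p => k p - g p)) :
    Cond k v := by
  obtain ⟨l, c, q, h1, h2, h3, h4, h5⟩ := h
  exact ⟨l, c, q, h1, h2, h3, h4, (hk.add h5).eq fun p => by ring⟩

lemma Cond.congr {g k : ℝ × ℝ → ℝ} {v : ℝ × ℝ} (h : Cond g v) (hk : Sm k) (e : k =ᶠ[𝓝 0] g) :
    Cond k v := by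
  obtain ⟨l, c, q, h1, h2, h3, h4, h5⟩ := h
  refine ⟨l, c, q, h1, h2, h3, h4, h5.congr ?_ ?_⟩
  · exact hk.sub ((sm_clm l).mul (((sm_const c).mul (sm_clm l)).add h4.1))
  · filter_upwards [e] with p hp
    rw [hp]

lemma Cond.mul {g u : ℝ × ℝ → ℝ} {v : ℝ × ℝ} (h : Cond g v) (hu : Sm u) (u0 : u 0 ≠ 0) :
    Cond (fun p => u p * g p) v := by
  obtain ⟨l, c, q, h1, h2, h3, h4, h5⟩ := h
  refine ⟨l, u 0 * c, fun p => u p * q p + (u p - u 0) * (c * l p), h1, h2, mul_ne_zero u0 h3,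
    ?_, ?_⟩
  · refine (Vn.smul hu h4).add ?_
    exact (Vn.one (hu.sub contDiff_const) (by simp)).mul ((vn_clm l).cmul c)
  · refine (Vn.smul hu h5).eq fun p => ?_
    ring

lemma Cond.comp {g : ℝ × ℝ → ℝ} {w : ℝ × ℝ} {φ : ℝ × ℝ → ℝ × ℝ}
    (hφ : ContDiff ℝ (⊤ : ℕ∞) φ) (h0 : φ 0 = 0) (hb : Function.Surjective (fderiv ℝ φ 0))
    (h : Cond g (fderiv ℝ φ 0 w)) : Cond (fun p => g (φ p)) w := by
  obtain ⟨l, c, q, h1, h2, h3, h4, h5⟩ := h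
  have hd : DifferentiableAt ℝ φ 0 := hφ.differentiable (by simp) 0
  set l' := l.comp (fderiv ℝ φ 0) with hl'
  have hsm : Sm (fun p => l (φ p) - l' p) := (l.contDiff.comp hφ).sub l'.contDiff
  have hr : Vn 2 (fun p => l (φ p) - l' p) := by
    refine Vn.two hsm (by simp [h0]) ?_
    have e1 : HasFDerivAt (fun p => l (φ p)) l' 0 := l.hasFDerivAt.comp 0 hd.hasFDerivAt
    have := (e1.sub l'.hasFDerivAt).fderiv
    rw [sub_self] at this
    exact this
  have hq := h4.comp hφ h0
  refine ⟨l', c, fun p => 2 * c * (l (φ p) - l' p) + q (φ p), by simp [hl', h1], ?_, h3, ?_, ?_⟩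
  · intro hz
    apply h2
    ext
    · obtain ⟨a, ha⟩ := hb (1, 0)
      have := congrArg (fun m => m a) hz
      simpa [hl', ha] using this
    · obtain ⟨a, ha⟩ := hb (0, 1)
      have := congrArg (fun m => m a) hz
      simpa [hl', ha] using this
  · exact (hr.cmul (2 * c)).add hq
  · have := (h5.comp hφ h0).add (hr.mul ((hr.cmul c).add hq))
    refine this.eq fun p => ?_
    ring

lemma hess_mul {h k : ℝ × ℝ → ℝ} (hh : Vn 1 h) (hk : Vn 1 k) (u w : ℝ × ℝ) :
    dop u (dop w (fun p => h p * k p)) 0 = dop u h 0 * dop w k 0 + dop w h 0 * dop u k 0 := by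
  rw [dop_mul hh.1 hk.1, dop_add ((hh.1.dop w).mul hk.1) (hh.1.mul (hk.1.dop w)),
    dop_mul (hh.1.dop w) hk.1, dop_mul hh.1 (hk.1.dop w)]
  simp [hh.at_zero, hk.at_zero]
  ring

lemma hess_add {h k : ℝ × ℝ → ℝ} (hh : Sm h) (hk : Sm k) (u w : ℝ × ℝ) :
    dop u (dop w (fun p => h p + k p)) 0 = dop u (dop w h) 0 + dop u (dop w k) 0 := by
  rw [dop_add hh hk, dop_add (hh.dop w) (hk.dop w)]

lemma Cond.vn2 {g : ℝ × ℝ → ℝ} {v : ℝ × ℝ} (h : Cond g v) : Vn 2 g := by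
  obtain ⟨l, c, q, h1, h2, h3, h4, h5⟩ := h
  have : Vn 1 (fun p => c * l p + q p) := ((vn_clm l).cmul c).add (h4.mono (by norm_num))
  refine ((h5.mono (by norm_num : 2 ≤ 4)).add ((vn_clm l).mul this)).eq fun p => ?_
  ring

lemma fderiv_zero_of_vn {g : ℝ × ℝ → ℝ} (h : Vn 2 g) : fderiv ℝ g 0 = 0 := by
  ext
  · simpa [dop] using (h.dop (1, 0)).at_zero
  · simpa [dop] using (h.dop (0, 1)).at_zero

lemma rank_one_iff (a b d : ℝ) :
    (!![a, b; b, d] : Matrix (Fin 2) (Fin 2) ℝ).rank = 1 ↔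
      a * d - b * b = 0 ∧ ¬ (a = 0 ∧ b = 0 ∧ d = 0) := by
  set M : Matrix (Fin 2) (Fin 2) ℝ := !![a, b; b, d] with hM
  have hdet : M.det = a * d - b * b := by simp [hM, Matrix.det_fin_two]
  have hle : M.rank ≤ 2 := by simpa using M.rank_le_width
  have h0 : M.rank = 0 ↔ (a = 0 ∧ b = 0 ∧ d = 0) := by
    constructor
    · intro h
      have hr : Module.finrank ℝ (LinearMap.range M.mulVecLin) = 0 := h
      rw [Submodule.finrank_eq_zero, LinearMap.range_eq_bot] at hr
      have h : M = 0 := by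
        ext i j
        have := congrFun (LinearMap.congr_fun hr (Pi.single j 1)) i
        simpa using this
      exact ⟨by simpa [hM] using congrFun (congrFun h 0) 0,
        by simpa [hM] using congrFun (congrFun h 0) 1, by simpa [hM] using congrFun (congrFun h 1) 1⟩
    · rintro ⟨rfl, rfl, rfl⟩
      have : M = 0 := by ext i j; fin_cases i <;> fin_cases j <;> simp [hM]
      rw [this, Matrix.rank_zero]
  have h2 : M.rank = 2 ↔ M.det ≠ 0 := by
    constructor
    · intro h hd
      obtain ⟨v, hv, hv'⟩ := Matrix.exists_mulVec_eq_zero_iff.2 hd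
      have hr : Module.finrank ℝ (LinearMap.range M.mulVecLin) = 2 := h
      have := M.mulVecLin.finrank_range_add_finrank_ker
      rw [hr] at this
      simp at this
      have hk : v ∈ LinearMap.ker M.mulVecLin := by simpa using hv'
      rw [this] at hk
      exact hv (by simpa using hk)
    · intro h
      have := Matrix.rank_of_isUnit M ((Matrix.isUnit_iff_isUnit_det M).2 (isUnit_iff_ne_zero.2 h))
      simpa using this
  rw [← hdet, ← h0]
  constructor
  · intro h
    refine ⟨?_, by omega⟩
    by_contra hc
    have := h2.2 hc
    omega
  · rintro ⟨h3, h4⟩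
    have : M.rank ≠ 2 := fun h => h2.1 h h3
    omega

lemma hess_eq {g : ℝ × ℝ → ℝ} (hg : Sm g) : hess g =
    !![dop (1, 0) (dop (1, 0) g) 0, dop (1, 0) (dop (0, 1) g) 0;
      dop (1, 0) (dop (0, 1) g) 0, dop (0, 1) (dop (0, 1) g) 0] := by
  have : pdy (pdx g) = dop (1, 0) (dop (0, 1) g) := dop_comm hg _ _
  unfold hess
  rw [this]
  rfl

lemma Cond.conds {g : ℝ × ℝ → ℝ} {η : ℝ × ℝ → ℝ × ℝ} (hη : ContDiff ℝ (⊤ : ℕ∞) η)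
    (h : Cond g (η 0)) : fderiv ℝ g 0 = 0 ∧ (hess g).rank = 1 ∧
      etaIter η 2 g 0 = 0 ∧ etaIter η 3 g 0 = 0 := by
  have hv2 := h.vn2
  obtain ⟨l, c, q, h1, h2, h3, h4, h5⟩ := h
  have hk : Vn 1 (fun p => c * l p + q p) := ((vn_clm l).cmul c).add (h4.mono (by norm_num))
  have hg : g = fun p => (fun p => l p * (c * l p + q p)) p +
    (fun p => g p - l p * (c * l p + q p)) p := by funext p; ring
  have hls : Sm (fun p => l p * (c * l p + q p)) := (sm_clm l).mul hk.1
  have hk1 : etaIter η 1 (fun p => c * l p + q p) 0 = 0 := by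
    rw [etaIter_add hη ((sm_const c).mul (sm_clm l)) h4.1, etaIter_cmul hη c (sm_clm l)]
    simp only [eta1_clm, h1]
    rw [(Vn.etaIter hη 1 (m := 1) h4).at_zero]
    simp
  refine ⟨fderiv_zero_of_vn hv2, ?_, ?_, ?_⟩
  · have key : ∀ u w : ℝ × ℝ, dop u (dop w g) 0 = 2 * c * l u * l w := by
      intro u w
      rw [hg, hess_add hls h5.1, hess_mul (vn_clm l) hk,
        ((h5.dop w).dop u).at_zero, dop_clm, dop_clm,
        dop_add ((sm_const c).mul (sm_clm l)) h4.1, dop_mul (sm_const c) (sm_clm l), dop_clm,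
        dop_add ((sm_const c).mul (sm_clm l)) h4.1, dop_mul (sm_const c) (sm_clm l), dop_clm]
      beta_reduce
      rw [(h4.dop w).at_zero, (h4.dop u).at_zero, dop_const, dop_const]
      ring
    rw [hess_eq hv2.1, rank_one_iff]
    simp only [key]
    refine ⟨by ring, ?_⟩
    rintro ⟨e1, -, e2⟩
    apply h2
    ext
    · simpa [h3] using e1
    · simpa [h3] using e2
  · rw [hg, etaIter_add_at hη hls h5.1, eta2_mul hη (sm_clm l) hk.1, hk.at_zero, hk1,
      (Vn.etaIter hη 2 (m := 2) h5).at_zero]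
    simp
  · rw [hg, etaIter_add_at hη hls h5.1, eta3_mul hη (sm_clm l) hk.1, hk.at_zero, hk1, eta1_clm, h1,
      (Vn.etaIter hη 3 (m := 1) h5).at_zero]
    simp

lemma exists_basis (v : ℝ × ℝ) (hv : v ≠ 0) : ∃ (l m : ℝ × ℝ →L[ℝ] ℝ) (w : ℝ × ℝ),
    l v = 0 ∧ m v = 1 ∧ l w = 1 ∧ m w = 0 ∧ ∀ p, p = l p • w + m p • v := by
  obtain ⟨a, b⟩ := v
  have hn : a ^ 2 + b ^ 2 ≠ 0 := by
    intro h
    apply hv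
    have h1 : a = 0 := by nlinarith [sq_nonneg a, sq_nonneg b]
    have h2 : b = 0 := by nlinarith [sq_nonneg a, sq_nonneg b]
    simp [h1, h2]
  refine ⟨b • ContinuousLinearMap.fst ℝ ℝ ℝ - a • ContinuousLinearMap.snd ℝ ℝ ℝ,
    (a / (a ^ 2 + b ^ 2)) • ContinuousLinearMap.fst ℝ ℝ ℝ +
      (b / (a ^ 2 + b ^ 2)) • ContinuousLinearMap.snd ℝ ℝ ℝ,
    (b / (a ^ 2 + b ^ 2), - a / (a ^ 2 + b ^ 2)), ?_, ?_, ?_, ?_, ?_⟩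
  · simp; ring
  · simp; field_simp
  · simp; field_simp; ring
  · simp; field_simp; ring
  · rintro ⟨x, y⟩
    ext
    · simp; field_simp; ring
    · simp; field_simp; ring

lemma Cond.of_conds {g : ℝ × ℝ → ℝ} {η : ℝ × ℝ → ℝ × ℝ} (hη : ContDiff ℝ (⊤ : ℕ∞) η)
    (hg : Sm g) (h0 : g 0 = 0) (hη0 : η 0 ≠ 0) (h1 : fderiv ℝ g 0 = 0) (h2 : (hess g).rank = 1)
    (h3 : etaIter η 2 g 0 = 0) (h4 : etaIter η 3 g 0 = 0) : Cond g (η 0) := by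
  obtain ⟨l, m, w, lv, mv, lw, mw, hb⟩ := exists_basis (η 0) hη0
  obtain ⟨c, b, a, hs⟩ := taylor2 (Vn.two hg h0 h1) hb
  have sl := sm_clm l
  have sm := sm_clm m
  set K : ℝ × ℝ →L[ℝ] ℝ := c • l + b • m with hK
  set A : ℝ × ℝ →L[ℝ] ℝ := a • m with hA
  have s1 : Sm (fun p => l p * K p) := sl.mul (sm_clm K)
  have s2 : Sm (fun p => m p * A p) := sm.mul (sm_clm A)
  have hs' : Vn 3 (fun p => g p - (l p * K p + m p * A p)) :=
    hs.eq fun p => by simp [hK, hA]; ring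
  have e : g = fun p => (l p * K p + m p * A p) + (g p - (l p * K p + m p * A p)) := by
    funext p; ring
  have ha : a = 0 := by
    rw [e, etaIter_add_at hη (s1.add s2) hs'.1, etaIter_add_at hη s1 s2,
      (Vn.etaIter hη 2 (m := 1) hs').at_zero, eta2_mul hη sl (sm_clm K),
      eta2_mul hη sm (sm_clm A), eta1_clm l, eta1_clm m, eta1_clm A, lv, mv] at h3
    simpa [hA, mv] using h3
  have hA0 : A = 0 := by simp [hA, ha]
  have key : ∀ u w : ℝ × ℝ, dop u (dop w g) 0 = l u * K w + l w * K u := by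
    intro u w
    rw [e, hess_add (s1.add s2) hs'.1, hess_add s1 s2, ((hs'.dop w).dop u).at_zero,
      hess_mul (vn_clm l) (vn_clm K), hess_mul (vn_clm m) (vn_clm A)]
    simp only [dop_clm]
    simp [hA0]
  rw [hess_eq hg, rank_one_iff] at h2
  simp only [key] at h2
  obtain ⟨hd, hne⟩ := h2
  have hdet : l (1, 0) * m (0, 1) - l (0, 1) * m (1, 0) ≠ 0 := by
    intro hz
    have hp := fun p : ℝ × ℝ => show l p = p.1 * l (1, 0) + p.2 * l (0, 1) by
      conv_lhs => rw [show p = p.1 • ((1, 0) : ℝ × ℝ) + p.2 • ((0, 1) : ℝ × ℝ) by ext <;> simp]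
      simp only [map_add, map_smul, smul_eq_mul]
    have hq := fun p : ℝ × ℝ => show m p = p.1 * m (1, 0) + p.2 * m (0, 1) by
      conv_lhs => rw [show p = p.1 • ((1, 0) : ℝ × ℝ) + p.2 • ((0, 1) : ℝ × ℝ) by ext <;> simp]
      simp only [map_add, map_smul, smul_eq_mul]
    have e1 := hp (η 0)
    have e2 := hq (η 0)
    have e3 := hp w
    have e4 := hq w
    rw [lv] at e1
    rw [mv] at e2
    rw [lw] at e3
    rw [mw] at e4
    have : (1 : ℝ) = (w.1 * (η 0).2 - w.2 * (η 0).1) *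
        (l (1, 0) * m (0, 1) - l (0, 1) * m (1, 0)) := by
      linear_combination e3 + (w.1 * l (1, 0) + w.2 * l (0, 1)) * e2
        - (w.1 * m (1, 0) + w.2 * m (0, 1)) * e1
    rw [hz, mul_zero] at this
    exact one_ne_zero this
  have hb0 : b = 0 := by
    have : b ^ 2 * (l (1, 0) * m (0, 1) - l (0, 1) * m (1, 0)) ^ 2 = 0 := by
      simp only [hK] at hd
      simp only [add_apply, smul_apply, smul_eq_mul] at hd
      linear_combination -hd
    rcases mul_eq_zero.1 this with h | h
    · exact pow_eq_zero_iff (two_ne_zero) |>.1 h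
    · exact absurd (pow_eq_zero_iff (two_ne_zero) |>.1 h) hdet
  have hc0 : c ≠ 0 := by
    intro hc
    apply hne
    simp [hK, hc, hb0]
  have hr : Vn 3 (fun p => g p - c * (l p * l p)) := hs.eq fun p => by
    rw [ha, hb0]; ring
  obtain ⟨a3, a2, a1, a0, ht⟩ := taylor3 hr hb
  set Q : ℝ × ℝ → ℝ := fun p => a3 * l p ^ 2 + a2 * (l p * m p) + a1 * m p ^ 2 with hQ
  have vQ : Vn 2 Q := by
    refine (((((vn_clm l).mul (vn_clm l)).cmul a3).add (((vn_clm l).mul (vn_clm m)).cmul a2)).add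
      (((vn_clm m).mul (vn_clm m)).cmul a1)).eq fun p => ?_
    simp only [hQ]; ring
  have hk : Vn 1 (fun p => c * l p + Q p) := ((vn_clm l).cmul c).add (vQ.mono (by norm_num))
  have ht' : Vn 4 (fun p => g p - (l p * (c * l p + Q p) + a0 * (m p * (m p * m p)))) :=
    ht.eq fun p => by simp only [hQ]; ring
  have hk1 : etaIter η 1 (fun p => c * l p + Q p) 0 = 0 := by
    rw [etaIter_add_at hη ((sm_const c).mul sl) vQ.1, etaIter_cmul hη c sl]
    simp only [eta1_clm, lv]
    rw [(Vn.etaIter hη 1 (m := 1) vQ).at_zero]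
    simp
  have sM := sm.mul (sm.mul sm)
  have e' : g = fun p => (l p * (c * l p + Q p) + a0 * (m p * (m p * m p))) +
      (g p - (l p * (c * l p + Q p) + a0 * (m p * (m p * m p)))) := by
    funext p; ring
  have ha0 : a0 = 0 := by
    rw [e', etaIter_add_at hη ((sl.mul hk.1).add ((sm_const a0).mul sM)) ht'.1,
      etaIter_add_at hη (sl.mul hk.1) ((sm_const a0).mul sM), etaIter_cmul hη a0 sM,
      (Vn.etaIter hη 3 (m := 1) ht').at_zero] at h4
    beta_reduce at h4
    rw [eta3_mul hη sl hk.1, eta3_mul hη sm (sm.mul sm), eta2_mul hη sm sm, eta1_mul sm sm,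
      hk1, hk.at_zero, eta1_clm, eta1_clm, lv, mv] at h4
    simpa using h4
  refine ⟨l, c, Q, lv, ?_, hc0, vQ, ht'.eq fun p => ?_⟩
  · intro h; rw [h] at lw; simp at lw
  · rw [ha0]; ring
/-! ### Jacobian determinants, local inverses -/

lemma clm_split {E : Type*} [NormedAddCommGroup E] [NormedSpace ℝ E] (A : ℝ × ℝ →L[ℝ] E)
    (p : ℝ × ℝ) : A p = p.1 • A (1, 0) + p.2 • A (0, 1) := by
  conv_lhs => rw [show p = p.1 • ((1, 0) : ℝ × ℝ) + p.2 • ((0, 1) : ℝ × ℝ) by ext <;> simp]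
  simp only [map_add, map_smul]

lemma bij_iff (A : ℝ × ℝ →L[ℝ] ℝ × ℝ) :
    (A (1, 0)).1 * (A (0, 1)).2 - (A (1, 0)).2 * (A (0, 1)).1 ≠ 0 ↔ Function.Bijective A := by
  constructor
  · intro h
    have hi : Function.Injective (A : ℝ × ℝ →ₗ[ℝ] ℝ × ℝ) := by
      rw [← LinearMap.ker_eq_bot, LinearMap.ker_eq_bot']
      intro p hp
      have hp' : A p = 0 := hp
      rw [clm_split A p] at hp'
      have e1 := congrArg Prod.fst hp'
      have e2 := congrArg Prod.snd hp'
      simp at e1 e2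
      ext
      · apply (mul_eq_zero.1 (_ : p.1 * _ = 0)).resolve_right h
        linear_combination (A (0, 1)).2 * e1 - (A (0, 1)).1 * e2
      · apply (mul_eq_zero.1 (_ : p.2 * _ = 0)).resolve_right h
        linear_combination - (A (1, 0)).2 * e1 + (A (1, 0)).1 * e2
    exact ⟨hi, LinearMap.injective_iff_surjective.1 hi⟩
  · intro h hd
    have hz : ∀ p, A p = 0 → p = 0 := fun p hp => h.1 (by rw [hp, map_zero])
    have e1 := hz ((A (0, 1)).2, -(A (1, 0)).2) (by
      rw [clm_split]; ext
      · simp; linear_combination hd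
      · simp; ring)
    have e2 := hz ((A (0, 1)).1, -(A (1, 0)).1) (by
      rw [clm_split]; ext
      · simp; ring
      · simp; linear_combination -hd)
    simp at e1 e2
    have := hz (1, 0) (by ext; exact e2.2; exact e1.2)
    simp at this

lemma jac_bij (f : ℝ × ℝ → ℝ × ℝ) (p : ℝ × ℝ) :
    jacDet f p ≠ 0 ↔ Function.Bijective (fderiv ℝ f p) := bij_iff _

lemma diffOf {f : ℝ × ℝ → ℝ × ℝ} (hf : ContDiff ℝ (⊤ : ℕ∞) f) : Differentiable ℝ f :=
  hf.differentiable (by simp)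

lemma sm_jac {f : ℝ × ℝ → ℝ × ℝ} (hf : ContDiff ℝ (⊤ : ℕ∞) f) : Sm (jacDet f) := by
  have h : ContDiff ℝ (⊤ : ℕ∞) (fderiv ℝ f) := hf.fderiv_right (by simp)
  have h1 := h.clm_apply (contDiff_const (c := ((1, 0) : ℝ × ℝ)))
  have h2 := h.clm_apply (contDiff_const (c := ((0, 1) : ℝ × ℝ)))
  exact (h1.fst.mul h2.snd).sub (h1.snd.mul h2.fst)

lemma jac_comp {f g : ℝ × ℝ → ℝ × ℝ} {p : ℝ × ℝ} (hf : DifferentiableAt ℝ f (g p))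
    (hg : DifferentiableAt ℝ g p) :
    jacDet (fun p => f (g p)) p = jacDet f (g p) * jacDet g p := by
  have : fderiv ℝ (fun p => f (g p)) p = (fderiv ℝ f (g p)).comp (fderiv ℝ g p) :=
    fderiv_comp p hf hg
  unfold jacDet
  rw [this]
  simp only [ContinuousLinearMap.comp_apply]
  rw [clm_split (fderiv ℝ f (g p)) (fderiv ℝ g p (1, 0)),
    clm_split (fderiv ℝ f (g p)) (fderiv ℝ g p (0, 1))]
  simp
  ring

lemma jac_eq {f : ℝ × ℝ → ℝ × ℝ} (hf : ContDiff ℝ (⊤ : ℕ∞) f) (p : ℝ × ℝ) :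
    jacDet f p = dop (1, 0) (fun p => (f p).1) p * dop (0, 1) (fun p => (f p).2) p -
      dop (1, 0) (fun p => (f p).2) p * dop (0, 1) (fun p => (f p).1) p := by
  have h := (diffOf hf p).hasFDerivAt
  simp only [dop, jacDet]
  rw [h.fst.fderiv, h.snd.fderiv]
  rfl

lemma jac_vn {n : ℕ} {F N : ℝ × ℝ → ℝ × ℝ} (hF : ContDiff ℝ (⊤ : ℕ∞) F)
    (hN : ContDiff ℝ (⊤ : ℕ∞) N) (h1 : Vn (n + 1) (fun p => (F p).1 - (N p).1))
    (h2 : Vn (n + 1) (fun p => (F p).2 - (N p).2)) : Vn n (fun p => jacDet F p - jacDet N p) := by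
  have a := fun v => (h1.dop v)
  have b := fun v => (h2.dop v)
  simp only [dop_sub hF.fst hN.fst] at a
  simp only [dop_sub hF.snd hN.snd] at b
  have sF := fun v => Sm.dop hF.snd v
  have sN := fun v => Sm.dop hN.fst v
  refine ((((Vn.smul (sF (0, 1)) (a (1, 0))).add (Vn.smul (sN (1, 0)) (b (0, 1)))).sub
    (Vn.smul (sF (1, 0)) (a (0, 1)))).sub (Vn.smul (sN (0, 1)) (b (1, 0)))).eq fun p => ?_
  rw [jac_eq hF, jac_eq hN]
  ring

lemma globalise {E : Type*} [NormedAddCommGroup E] [NormedSpace ℝ E] {h : ℝ × ℝ → E}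
    {U : Set (ℝ × ℝ)} (hU : U ∈ 𝓝 0) (hh : ContDiffOn ℝ (⊤ : ℕ∞) h U) :
    ∃ k : ℝ × ℝ → E, ContDiff ℝ (⊤ : ℕ∞) k ∧ k =ᶠ[𝓝 0] h := by
  obtain ⟨r, hr, hrU⟩ := Metric.nhds_basis_closedBall.mem_iff.1 (interior_mem_nhds.2 hU)
  let β : ContDiffBump (0 : ℝ × ℝ) := ⟨r / 2, r, by positivity, by linarith⟩
  refine ⟨fun p => β p • h p, ?_, ?_⟩
  · rw [contDiff_iff_contDiffAt]
    intro p
    by_cases hp : p ∈ tsupport β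
    · have hpU : p ∈ interior U := hrU (by rwa [β.tsupport_eq] at hp)
      exact (β.contDiff.contDiffAt).smul (hh.contDiffAt (mem_interior_iff_mem_nhds.1 hpU))
    · have : (fun p => β p • h p) =ᶠ[𝓝 p] fun _ => 0 := by
        filter_upwards [notMem_tsupport_iff_eventuallyEq.1 hp] with q hq
        simp [hq]
      exact contDiffAt_const.congr_of_eventuallyEq this
  · filter_upwards [β.eventuallyEq_one] with p hp
    simp [hp]

lemma exists_inverse {φ : ℝ × ℝ → ℝ × ℝ} (hφ : ContDiff ℝ (⊤ : ℕ∞) φ) (h0 : φ 0 = 0)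
    (hb : Function.Bijective (fderiv ℝ φ 0)) :
    ∃ χ : ℝ × ℝ → ℝ × ℝ, ContDiff ℝ (⊤ : ℕ∞) χ ∧ χ 0 = 0 ∧ (∀ᶠ p in 𝓝 0, φ (χ p) = p) ∧
      (∀ᶠ p in 𝓝 0, χ (φ p) = p) ∧ (∀ v, fderiv ℝ φ 0 (fderiv ℝ χ 0 v) = v) ∧
      (∀ v, fderiv ℝ χ 0 (fderiv ℝ φ 0 v) = v) := by
  have eqv : ∀ p, jacDet φ p ≠ 0 → ∃ A : (ℝ × ℝ) ≃L[ℝ] ℝ × ℝ, (A : ℝ × ℝ →L[ℝ] ℝ × ℝ) = fderiv ℝ φ p := by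
    intro p hp
    have := (jac_bij φ p).1 hp
    exact ⟨ContinuousLinearEquiv.ofBijective (fderiv ℝ φ p)
      (LinearMap.ker_eq_bot.2 this.1) (LinearMap.range_eq_top.2 this.2),
      ContinuousLinearEquiv.coe_ofBijective _ _ _⟩
  have hj0 : jacDet φ 0 ≠ 0 := (jac_bij φ 0).2 hb
  obtain ⟨A, hA⟩ := eqv 0 hj0
  have hd0 : HasFDerivAt φ (A : ℝ × ℝ →L[ℝ] ℝ × ℝ) 0 := by
    rw [hA]; exact (diffOf hφ 0).hasFDerivAt
  set e := (hφ.contDiffAt (x := 0)).toOpenPartialHomeomorph φ hd0 (by simp) with he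
  have hcoe : (e : ℝ × ℝ → ℝ × ℝ) = φ := rfl
  have hs : (0 : ℝ × ℝ) ∈ e.source :=
    ContDiffAt.mem_toOpenPartialHomeomorph_source (hφ.contDiffAt (x := 0)) hd0 (by simp)
  have ht : (0 : ℝ × ℝ) ∈ e.target := by
    have := e.map_source hs
    rwa [hcoe, h0] at this
  have hes0 : e.symm 0 = 0 := by
    have := e.left_inv hs
    rwa [hcoe, h0] at this
  set U : Set (ℝ × ℝ) := {a | a ∈ e.target ∧ jacDet φ (e.symm a) ≠ 0} with hU
  have hUn : U ∈ 𝓝 (0 : ℝ × ℝ) := by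
    have c1 : ContinuousAt e.symm 0 := e.symm.continuousAt ht
    have c2 : ContinuousAt (fun a => jacDet φ (e.symm a)) 0 :=
      (sm_jac hφ).continuous.continuousAt.comp c1
    have c3 := c2.eventually_ne (y := 0) (by rw [hes0]; exact hj0)
    filter_upwards [e.open_target.mem_nhds ht, c3] with a h1 h2 using ⟨h1, h2⟩
  have hCD : ContDiffOn ℝ (⊤ : ℕ∞) e.symm U := by
    rintro a ⟨ha, haj⟩
    obtain ⟨B, hB⟩ := eqv _ haj
    refine (e.contDiffAt_symm (f₀' := B) ha ?_ ?_).contDiffWithinAt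
    · rw [hB]; exact (diffOf hφ _).hasFDerivAt
    · exact hφ.contDiffAt
  obtain ⟨χ, hχ, hχe⟩ := globalise hUn hCD
  have hχ0 : χ 0 = 0 := by rw [hχe.self_of_nhds, hes0]
  have r1 : ∀ᶠ p in 𝓝 0, φ (χ p) = p := by
    filter_upwards [hχe, e.open_target.mem_nhds ht] with p h1 h2
    rw [h1]; exact e.right_inv h2
  have r2 : ∀ᶠ p in 𝓝 0, χ (φ p) = p := by
    have cφ : Tendsto φ (𝓝 0) (𝓝 0) := by
      have := hφ.continuous.tendsto 0
      rwa [h0] at this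
    filter_upwards [cφ.eventually hχe, e.open_source.mem_nhds hs] with p h1 h2
    rw [h1]; exact e.left_inv h2
  have dφ : HasFDerivAt φ (fderiv ℝ φ 0) 0 := (diffOf hφ 0).hasFDerivAt
  have dχ : HasFDerivAt χ (fderiv ℝ χ 0) 0 := (diffOf hχ 0).hasFDerivAt
  refine ⟨χ, hχ, hχ0, r1, r2, ?_, ?_⟩
  · have h1 : HasFDerivAt (fun p => φ (χ p)) ((fderiv ℝ φ 0).comp (fderiv ℝ χ 0)) 0 :=
      HasFDerivAt.comp (g := φ) 0 (by rw [hχ0]; exact dφ) dχ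
    have h2 : HasFDerivAt (fun p => φ (χ p)) (ContinuousLinearMap.id ℝ (ℝ × ℝ)) 0 :=
      (hasFDerivAt_id 0).congr_of_eventuallyEq r1
    intro v
    exact congrArg (fun L => L v) (h1.unique h2)
  · have h1 : HasFDerivAt (fun p => χ (φ p)) ((fderiv ℝ χ 0).comp (fderiv ℝ φ 0)) 0 :=
      HasFDerivAt.comp (g := χ) 0 (by rw [h0]; exact dχ) dφ
    have h2 : HasFDerivAt (fun p => χ (φ p)) (ContinuousLinearMap.id ℝ (ℝ × ℝ)) 0 :=
      (hasFDerivAt_id 0).congr_of_eventuallyEq r2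
    intro v
    exact congrArg (fun L => L v) (h1.unique h2)

lemma jets_iff {r : ℕ} {F G : ℝ × ℝ → ℝ × ℝ} (hF : ContDiff ℝ (⊤ : ℕ∞) F)
    (hG : ContDiff ℝ (⊤ : ℕ∞) G) :
    (∀ i ≤ r, iteratedFDeriv ℝ i F 0 = iteratedFDeriv ℝ i G 0) ↔
      Vn (r + 1) (fun p => (F p).1 - (G p).1) ∧ Vn (r + 1) (fun p => (F p).2 - (G p).2) := by
  have hd : ContDiff ℝ (⊤ : ℕ∞) (F - G) := hF.sub hG
  have hsub : ∀ i : ℕ, iteratedFDeriv ℝ i (F - G) 0 =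
      iteratedFDeriv ℝ i F 0 - iteratedFDeriv ℝ i G 0 := fun i =>
    iteratedFDeriv_sub_apply (hF.of_le (nat_le_top i)).contDiffAt
      (hG.of_le (nat_le_top i)).contDiffAt
  constructor
  · intro h
    refine ⟨⟨hF.fst.sub hG.fst, fun i hi => ?_⟩, ⟨hF.snd.sub hG.snd, fun i hi => ?_⟩⟩
    · have := (ContinuousLinearMap.fst ℝ ℝ ℝ).iteratedFDeriv_comp_left
        (hd.contDiffAt (x := 0)) (nat_le_top i)
      rw [hsub, h i (by omega), sub_self] at this
      refine Eq.trans this ?_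
      ext m; simp
    · have := (ContinuousLinearMap.snd ℝ ℝ ℝ).iteratedFDeriv_comp_left
        (hd.contDiffAt (x := 0)) (nat_le_top i)
      rw [hsub, h i (by omega), sub_self] at this
      refine Eq.trans this ?_
      ext m; simp
  · rintro ⟨h1, h2⟩ i hi
    rw [← sub_eq_zero, ← hsub]
    have c1 := (ContinuousLinearMap.inl ℝ ℝ ℝ).iteratedFDeriv_comp_left (h1.1.atn i) le_rfl
    have c2 := (ContinuousLinearMap.inr ℝ ℝ ℝ).iteratedFDeriv_comp_left (h2.1.atn i) le_rfl
    rw [h1.2 i (by omega)] at c1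
    rw [h2.2 i (by omega)] at c2
    have c3 := iteratedFDeriv_add_apply (i := i) (x := (0 : ℝ × ℝ))
      ((ContinuousLinearMap.inl ℝ ℝ ℝ).contDiff.contDiffAt.comp 0 (h1.1.atn i))
      ((ContinuousLinearMap.inr ℝ ℝ ℝ).contDiff.contDiffAt.comp 0 (h2.1.atn i))
    have e : F - G = ((ContinuousLinearMap.inl ℝ ℝ ℝ) ∘ fun p => (F p).1 - (G p).1) +
        ((ContinuousLinearMap.inr ℝ ℝ ℝ) ∘ fun p => (F p).2 - (G p).2) := by
      funext p; ext <;> simp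
    rw [e, c3, c1, c2]
    ext m <;> simp

lemma corank_facts {f : ℝ × ℝ → ℝ × ℝ} (h : CorankOne f) :
    jacDet f 0 = 0 ∧ fderiv ℝ f 0 ≠ 0 := by
  unfold CorankOne at h
  constructor
  · by_contra hj
    have hb := (jac_bij f 0).1 hj
    have hr : LinearMap.range (fderiv ℝ f 0).toLinearMap = ⊤ := LinearMap.range_eq_top.2 hb.2
    rw [LinearMap.rank, hr, rank_top] at h
    have : Module.finrank ℝ (ℝ × ℝ) = 1 := Module.finrank_eq_of_rank_eq (by simpa using h)
    simp at this
  · intro hz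
    rw [hz] at h
    simp at h

lemma ker_collinear {A : ℝ × ℝ →L[ℝ] ℝ × ℝ} (hA : A ≠ 0) {u v : ℝ × ℝ} (hu : A u = 0)
    (hv : A v = 0) (hv0 : v ≠ 0) : ∃ t : ℝ, u = t • v := by
  obtain ⟨l, m, w, lv, mv, lw, mw, hb⟩ := exists_basis v hv0
  have hw : A w ≠ 0 := by
    intro hw
    apply hA
    refine ContinuousLinearMap.ext fun p => ?_
    rw [hb p]
    simp [hw, hv]
  refine ⟨m u, ?_⟩
  have h1 := hu
  rw [hb u, map_add, map_smul, map_smul, hv, smul_zero, add_zero] at h1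
  have : l u = 0 := (smul_eq_zero.1 h1).resolve_right hw
  conv_lhs => rw [hb u, this]
  simp

lemma cond_of_jet {f η N : ℝ × ℝ → ℝ × ℝ} (hf : ContDiff ℝ (⊤ : ℕ∞) f) (hf0 : f 0 = 0)
    (hcr : CorankOne f) (hη : fderiv ℝ f 0 (η 0) = 0)
    (hN : ContDiff ℝ (⊤ : ℕ∞) N) (hNc : Cond (jacDet N) (0, 1)) (hN1 : fderiv ℝ N 0 (0, 1) = 0)
    (h : JetEquiv 4 f N) : Cond (jacDet f) (η 0) := by
  obtain ⟨φ, ψ, hφ, hψ, φ0, ψ0, bφ, bψ, hj⟩ := h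
  have hF : ContDiff ℝ (⊤ : ℕ∞) (ψ ∘ f ∘ φ) := hψ.comp (hf.comp hφ)
  obtain ⟨j1, j2⟩ := (jets_iff hF hN).1 hj
  have hFc : Cond (jacDet (ψ ∘ f ∘ φ)) (0, 1) := hNc.of_sub (jac_vn hF hN j1 j2)
  have hfac : ∀ p, jacDet (ψ ∘ f ∘ φ) p = (jacDet ψ (f (φ p)) * jacDet φ p) * jacDet f (φ p) := by
    intro p
    have e1 := jac_comp (f := ψ) (g := fun p => f (φ p)) (p := p) (diffOf hψ _)
      (diffOf (hf.comp hφ) _)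
    have e2 := jac_comp (f := f) (g := φ) (p := p) (diffOf hf _) (diffOf hφ _)
    rw [e2] at e1
    exact e1.trans (by ring)
  set u : ℝ × ℝ → ℝ := fun p => jacDet ψ (f (φ p)) * jacDet φ p with hu
  have su : Sm u := ((sm_jac hψ).comp (hf.comp hφ)).mul (sm_jac hφ)
  have u0 : u 0 ≠ 0 := by
    simp only [hu, φ0, hf0]
    exact mul_ne_zero ((jac_bij ψ 0).2 bψ) ((jac_bij φ 0).2 bφ)
  have hUn : {p | u p ≠ 0} ∈ 𝓝 (0 : ℝ × ℝ) :=
    su.continuous.continuousAt.eventually_ne u0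
  obtain ⟨u', su', hu'⟩ := globalise (h := fun p => (u p)⁻¹) hUn (su.contDiffOn.inv fun p hp => hp)
  have u'0 : u' 0 ≠ 0 := by rw [hu'.self_of_nhds]; exact inv_ne_zero u0
  obtain ⟨χ, hχ, χ0, r1, r2, d1, d2⟩ := exists_inverse hφ φ0 bφ
  set w := fderiv ℝ φ 0 (0, 1) with hw
  have c1 : Cond (fun p => u' p * jacDet (ψ ∘ f ∘ φ) p) (fderiv ℝ χ 0 w) := by
    rw [hw, d2]; exact hFc.mul su' u'0
  have c2 := Cond.comp hχ χ0 (fun v => ⟨_, d2 v⟩) c1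
  have c3 : Cond (jacDet f) w := by
    refine c2.congr (sm_jac hf) ?_
    have tχ : Tendsto χ (𝓝 0) (𝓝 0) := by
      have := hχ.continuous.tendsto 0
      rwa [χ0] at this
    filter_upwards [r1, tχ.eventually hu', tχ.eventually hUn] with p h1 h2 h3
    have h3' : u (χ p) ≠ 0 := h3
    have hfac' : jacDet (ψ ∘ f ∘ φ) (χ p) = u (χ p) * jacDet f (φ (χ p)) := hfac (χ p)
    rw [hfac', h2, ← mul_assoc, inv_mul_cancel₀ h3', one_mul, h1]
  have hwk : fderiv ℝ f 0 w = 0 := by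
    have e1 : fderiv ℝ (ψ ∘ f ∘ φ) 0 (0, 1) = 0 := by
      have := congrArg (fun m => m (fun _ => ((0, 1) : ℝ × ℝ))) (hj 1 (by norm_num))
      simp only [iteratedFDeriv_one_apply] at this
      rw [this, hN1]
    have e2 : HasFDerivAt (ψ ∘ f ∘ φ) ((fderiv ℝ ψ 0).comp ((fderiv ℝ f 0).comp (fderiv ℝ φ 0))) 0 := by
      refine HasFDerivAt.comp 0 ?_ (HasFDerivAt.comp 0 ?_ (diffOf hφ 0).hasFDerivAt)
      · simp only [Function.comp, φ0, hf0]; exact (diffOf hψ 0).hasFDerivAt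
      · rw [φ0]; exact (diffOf hf 0).hasFDerivAt
    rw [e2.fderiv] at e1
    exact bψ.1 (by rw [map_zero]; exact e1)
  have hw0 : w ≠ 0 := by
    intro h
    have : ((0, 1) : ℝ × ℝ) = 0 := bφ.1 (by rw [map_zero]; exact h)
    simp at this
  obtain ⟨t, ht⟩ := ker_collinear (corank_facts hcr).2 hη hwk hw0
  rw [ht]
  exact c3.vmul t
/-! ### Normal forms -/

lemma vn_const_zero (n : ℕ) : Vn n (fun _ => (0:ℝ)) := ⟨sm_const 0, fun i _ => by simp⟩

lemma hasDerivAt_line {h : ℝ × ℝ → ℝ} (hh : Sm h) (x y : ℝ) :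
    HasDerivAt (fun t => h (x, t)) (dop (0, 1) h (x, y)) y := by
  have h1 : HasFDerivAt h (fderiv ℝ h (x, y)) (x, y) := (hh.diff _).hasFDerivAt
  have h2 : HasDerivAt (fun t : ℝ => ((x, t) : ℝ × ℝ)) (0, 1) y :=
    (hasDerivAt_const y x).prodMk (hasDerivAt_id y)
  exact h1.comp_hasDerivAt y h2

lemma jetEquiv_aux {F : ℝ × ℝ → ℝ × ℝ} (hF : ContDiff ℝ (⊤ : ℕ∞) F) (hF0 : F 0 = 0)
    (hF1 : ∀ᶠ p in 𝓝 0, (F p).1 = p.1) {a b c d s τ : ℝ} (hc : c ≠ 0) (hs : s ≠ 0)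
    (hτ : τ * c * s ^ 2 = 1)
    (hg : Vn 5 (fun p => (F p).2 - (F (p.1, 0)).2 - (c * p.1 ^ 2 * p.2 + a * p.1 ^ 3 * p.2 +
      b * p.1 ^ 2 * p.2 ^ 2 + d * p.1 * p.2 ^ 3))) :
    JetEquiv 4 F (fun p => (p.1, p.1 ^ 2 * p.2 + τ * d * s * (p.1 * p.2 ^ 3))) := by
  have hτ0 : τ ≠ 0 := by rintro rfl; simp at hτ
  set r : ℝ × ℝ → ℝ := fun p => (-(a / c * s)) * (p.1 * p.2) + (-(b / c)) * (p.2 * p.2) with hr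
  have vr : Vn 2 r := ((vn_fst.mul vn_snd).cmul _).add ((vn_snd.mul vn_snd).cmul _)
  set φ : ℝ × ℝ → ℝ × ℝ := fun p => (s * p.1, p.2 + r p) with hφd
  have hφ : ContDiff ℝ (⊤ : ℕ∞) φ := ((sm_const s).mul sm_fst).prodMk (sm_snd.add vr.1)
  have φ0 : φ 0 = 0 := by simp [hφd, hr]
  have sk : Sm (fun p => (F (p.1, 0)).2) :=
    (hF.comp (sm_fst.prodMk (sm_const 0))).snd
  set ψ : ℝ × ℝ → ℝ × ℝ := fun p => (s⁻¹ * p.1, τ * (p.2 - (F (p.1, 0)).2)) with hψd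
  have sψ2 : Sm (fun p => p.2 - (F (p.1, 0)).2) := sm_snd.sub sk
  have hψ : ContDiff ℝ (⊤ : ℕ∞) ψ :=
    ((sm_const s⁻¹).mul sm_fst).prodMk ((sm_const τ).mul sψ2)
  have hF00 : F (0, 0) = 0 := hF0
  have ψ0 : ψ 0 = 0 := by simp [hψd, hF00]
  have hN : ContDiff ℝ (⊤ : ℕ∞) (fun p : ℝ × ℝ =>
      (p.1, p.1 ^ 2 * p.2 + τ * d * s * (p.1 * p.2 ^ 3))) := by fun_prop
  have hC : ContDiff ℝ (⊤ : ℕ∞) (ψ ∘ F ∘ φ) := hψ.comp (hF.comp hφ)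
  have tφ : Tendsto φ (𝓝 0) (𝓝 0) := by
    have := hφ.continuous.tendsto 0
    rwa [φ0] at this
  have hF1' := tφ.eventually hF1
  refine ⟨φ, ψ, hφ, hψ, φ0, ψ0, ?_, ?_, (jets_iff hC hN).2 ⟨?_, ?_⟩⟩
  · rw [← jac_bij, jac_eq hφ]
    simp only [hφd]
    rw [dop_mul (sm_const s) sm_fst, dop_mul (sm_const s) sm_fst, dop_add sm_snd vr.1,
      dop_add sm_snd vr.1]
    beta_reduce
    rw [(vr.dop _).at_zero, (vr.dop _).at_zero]
    simp [dop_const, dop_fst, dop_snd, hs]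
  · rw [← jac_bij, jac_eq hψ]
    simp only [hψd]
    have hk : dop (0, 1) (fun p => (F (p.1, 0)).2) 0 = 0 :=
      (hasDerivAt_line sk 0 0).unique (hasDerivAt_const (0:ℝ) ((F ((0:ℝ), 0)).2))
    rw [dop_mul (sm_const s⁻¹) sm_fst, dop_mul (sm_const s⁻¹) sm_fst, dop_mul (sm_const τ) sψ2,
      dop_mul (sm_const τ) sψ2, dop_sub sm_snd sk, dop_sub sm_snd sk]
    simp [dop_const, dop_fst, dop_snd, hs, hk, hτ0]
  · refine (vn_const_zero 5).congr (hC.fst.sub hN.fst) ?_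
    filter_upwards [hF1'] with p hp
    simp only [Function.comp, hψd, hp]
    simp only [hφd]
    field_simp
    ring
  · have v1 := (hg.comp hφ φ0).cmul τ
    have x1 : Vn 1 (fun p => s * p.1) := vn_fst.cmul s
    have m1 : Vn 5 (fun p => a * ((s * p.1) * ((s * p.1) * ((s * p.1) * r p)))) :=
      (x1.mul (x1.mul (x1.mul vr))).cmul a
    have m2 : Vn 5 (fun p => b * ((s * p.1) * ((s * p.1) * ((2 * p.2 + r p) * r p)))) :=
      (x1.mul (x1.mul (((vn_snd.cmul 2).add (vr.mono (by norm_num))).mul vr))).cmul b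
    have y1 : Vn 2 (fun p => 3 * (p.2 * p.2) + (3 * p.2 + r p) * r p) :=
      ((vn_snd.mul vn_snd).cmul 3).add (Vn.smul ((vn_snd.cmul 3).1.add vr.1) vr)
    have m3 : Vn 5 (fun p => d * ((s * p.1) * ((3 * (p.2 * p.2) + (3 * p.2 + r p) * r p) * r p))) :=
      (x1.mul (y1.mul vr)).cmul d
    refine (v1.add (((m1.add m2).add m3).cmul τ)).congr (hC.snd.sub hN.snd) ?_
    filter_upwards [hF1'] with p hp
    simp only [Function.comp, hψd, hp]
    have hz : c * r p + a * (s * p.1) * p.2 + b * p.2 ^ 2 = 0 := by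
      simp only [hr]; field_simp; ring
    simp only [hφd]
    linear_combination τ * s ^ 2 * p.1 ^ 2 * hz + p.1 ^ 2 * p.2 * hτ

lemma normal_form {F : ℝ × ℝ → ℝ × ℝ} (hF : ContDiff ℝ (⊤ : ℕ∞) F) (hF0 : F 0 = 0)
    (hF1 : ∀ᶠ p in 𝓝 0, (F p).1 = p.1) (hc : Cond (jacDet F) (0, 1)) :
    JetEquiv 4 F (fun p => (p.1, p.1 ^ 2 * p.2 + p.1 * p.2 ^ 3)) ∨
        JetEquiv 4 F (fun p => (p.1, p.1 ^ 2 * p.2)) := by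
  have hj : dop (0, 1) (fun p => (F p).2) =ᶠ[𝓝 0] jacDet F := by
    have : (fun p => (F p).1) =ᶠ[𝓝 0] fun p => p.1 := hF1
    filter_upwards [this.fderiv (𝕜 := ℝ)] with p hp
    rw [jac_eq hF]
    have e : ∀ v, dop v (fun p => (F p).1) p = v.1 := by
      intro v
      have h1 : dop v (fun p => (F p).1) p = dop v (fun p => p.1) p := by simp only [dop, hp]
      rw [h1, dop_fst]
    rw [e, e]
    simp
  have hc' := hc.congr (Sm.dop hF.snd (0, 1)) hj
  obtain ⟨l, c, q, h1, h2, h3, h4, h5⟩ := hc'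
  have hl : ∀ p, l p = l (1, 0) * p.1 := by
    intro p
    rw [clm_split l p, h1]
    simp [mul_comm]
  have hα : l (1, 0) ≠ 0 := by
    intro h
    apply h2
    refine ContinuousLinearMap.ext fun p => ?_
    rw [hl, h]; simp
  set α := l (1, 0) with hαd
  obtain ⟨a, b, d, hq⟩ := taylor2 h4 (l := ContinuousLinearMap.fst ℝ ℝ ℝ)
    (m := ContinuousLinearMap.snd ℝ ℝ ℝ) (w := (1, 0)) (v := (0, 1)) (fun p => by ext <;> simp)
  simp only [ContinuousLinearMap.coe_fst', ContinuousLinearMap.coe_snd'] at hq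
  have hc0 : c * α ^ 2 ≠ 0 := mul_ne_zero h3 (pow_ne_zero _ hα)
  set P : ℝ × ℝ → ℝ := fun p => c * α ^ 2 * p.1 ^ 2 * p.2 + α * a * p.1 ^ 3 * p.2 +
      α * b / 2 * p.1 ^ 2 * p.2 ^ 2 + α * d / 3 * p.1 * p.2 ^ 3 with hP
  have sP : Sm P := by
    simp only [hP]
    show ContDiff ℝ _ _
    fun_prop
  have dP : ∀ p, dop (0, 1) P p = c * α ^ 2 * p.1 ^ 2 + α * a * p.1 ^ 3 +
      α * b * p.1 ^ 2 * p.2 + α * d * p.1 * p.2 ^ 2 := by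
    rintro ⟨x, y⟩
    refine (hasDerivAt_line sP x y).unique ?_
    have e1 := (hasDerivAt_id y).const_mul (c * α ^ 2 * x ^ 2 + α * a * x ^ 3)
    have e2 := (hasDerivAt_pow 2 y).const_mul (α * b / 2 * x ^ 2)
    have e3 := (hasDerivAt_pow 3 y).const_mul (α * d / 3 * x)
    refine HasDerivAt.congr_deriv (HasDerivAt.congr_of_eventuallyEq ((e1.add e2).add e3)
      (Eventually.of_forall fun t => ?_)) ?_
    · simp [hP]; ring
    · simp; ring
  have sk : Sm (fun p => (F (p.1, 0)).2) :=
    (hF.comp (sm_fst.prodMk (sm_const 0))).snd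
  have dk : ∀ p, dop (0, 1) (fun p => (F (p.1, 0)).2) p = 0 := fun p =>
    (hasDerivAt_line sk p.1 p.2).unique (hasDerivAt_const p.2 ((F (p.1, 0)).2))
  have sg : Sm (fun p => (F p).2) := hF.snd
  have hV : Vn 5 (fun p => (F p).2 - (F (p.1, 0)).2 - P p) := by
    refine integ 4 ((sg.sub sk).sub sP) (fun x => by simp [hP]) ?_
    rw [dop_sub (sg.sub sk) sP, dop_sub sg sk]
    refine (h5.add ((vn_fst.mul hq).cmul α)).eq fun p => ?_
    beta_reduce
    rw [dP, dk, hl]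
    ring
  by_cases hd : α * d / 3 = 0
  · right
    have := jetEquiv_aux hF hF0 hF1 (s := 1) (τ := (c * α ^ 2)⁻¹) hc0 one_ne_zero
      (by field_simp) hV
    rw [hd] at this
    simpa using this
  · left
    have := jetEquiv_aux hF hF0 hF1 (s := (α * d / 3) / (c * α ^ 2))
      (τ := (c * α ^ 2) / (α * d / 3) ^ 2) hc0 (div_ne_zero hd hc0) (by
        generalize α * d / 3 = D at *
        generalize c * α ^ 2 = C at *
        field_simp) hV
    have e : (c * α ^ 2) / (α * d / 3) ^ 2 * (α * d / 3) * ((α * d / 3) / (c * α ^ 2)) = 1 := by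
      generalize α * d / 3 = D at *
      generalize c * α ^ 2 = C at *
      field_simp
    rw [e] at this
    simpa using this

lemma JetEquiv.of_comp {r : ℕ} {f N L χ : ℝ × ℝ → ℝ × ℝ} (hL : ContDiff ℝ (⊤ : ℕ∞) L)
    (hχ : ContDiff ℝ (⊤ : ℕ∞) χ) (L0 : L 0 = 0) (χ0 : χ 0 = 0)
    (bL : Function.Bijective (fderiv ℝ L 0)) (bχ : Function.Bijective (fderiv ℝ χ 0))
    (h : JetEquiv r (fun p => L (f (χ p))) N) : JetEquiv r f N := by
  obtain ⟨φ, ψ, hφ, hψ, φ0, ψ0, bφ, bψ, hj⟩ := h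
  refine ⟨fun p => χ (φ p), fun p => ψ (L p), hχ.comp hφ, hψ.comp hL, by simp [φ0, χ0],
    by simp [ψ0, L0], ?_, ?_, hj⟩
  · rw [← jac_bij, jac_comp (diffOf hχ _) (diffOf hφ _), φ0]
    exact mul_ne_zero ((jac_bij _ _).2 bχ) ((jac_bij _ _).2 bφ)
  · rw [← jac_bij, jac_comp (diffOf hψ _) (diffOf hL _), L0]
    exact mul_ne_zero ((jac_bij _ _).2 bψ) ((jac_bij _ _).2 bL)

lemma jet_of_cond_aux {f : ℝ × ℝ → ℝ × ℝ} (hf : ContDiff ℝ (⊤ : ℕ∞) f) (hf0 : f 0 = 0)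
    {v : ℝ × ℝ} (hv : fderiv ℝ f 0 v = 0) (hv0 : v ≠ 0) (hc : Cond (jacDet f) v)
    (L : ℝ × ℝ →L[ℝ] ℝ × ℝ) (bL : Function.Bijective L) {p₀ : ℝ × ℝ}
    (hp₀ : (L (fderiv ℝ f 0 p₀)).1 ≠ 0) :
    JetEquiv 4 f (fun p => (p.1, p.1 ^ 2 * p.2 + p.1 * p.2 ^ 3)) ∨
        JetEquiv 4 f (fun p => (p.1, p.1 ^ 2 * p.2)) := by
  obtain ⟨l, m, w, lv, mv, lw, mw, hb⟩ := exists_basis v hv0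
  set Φ : ℝ × ℝ → ℝ × ℝ := fun p => ((L (f p)).1, m p) with hΦd
  have hΦ : ContDiff ℝ (⊤ : ℕ∞) Φ := (L.contDiff.comp hf).fst.prodMk m.contDiff
  have Φ0 : Φ 0 = 0 := by simp [hΦd, hf0]
  have dΦ : ∀ q, fderiv ℝ Φ 0 q = ((L (fderiv ℝ f 0 q)).1, m q) := by
    have h1 : HasFDerivAt (fun p => L (f p)) (L.comp (fderiv ℝ f 0)) 0 :=
      L.hasFDerivAt.comp 0 (diffOf hf 0).hasFDerivAt
    have h2 : HasFDerivAt Φ _ 0 := h1.fst.prodMk m.hasFDerivAt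
    intro q
    rw [h2.fderiv]
    rfl
  have hw : (L (fderiv ℝ f 0 w)).1 ≠ 0 := by
    intro h
    apply hp₀
    rw [hb p₀]
    simp [hv, h]
  have bΦ : Function.Bijective (fderiv ℝ Φ 0) := by
    have hi : Function.Injective (fderiv ℝ Φ 0 : ℝ × ℝ →ₗ[ℝ] ℝ × ℝ) := by
      rw [← LinearMap.ker_eq_bot, LinearMap.ker_eq_bot']
      intro q hq
      have hq' : fderiv ℝ Φ 0 q = 0 := hq
      rw [dΦ] at hq'
      have e1 := congrArg Prod.fst hq'
      have e2 := congrArg Prod.snd hq'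
      simp only [Prod.fst_zero, Prod.snd_zero] at e1 e2
      rw [hb q] at e1
      simp [hv, hw] at e1
      rw [hb q, e1, e2]
      simp
    exact ⟨hi, LinearMap.injective_iff_surjective.1 hi⟩
  obtain ⟨χ, hχ, χ0, r1, r2, d1, d2⟩ := exists_inverse hΦ Φ0 bΦ
  have bχ : Function.Bijective (fderiv ℝ χ 0) :=
    ⟨Function.LeftInverse.injective d1, Function.RightInverse.surjective d2⟩
  have bL' : Function.Bijective (fderiv ℝ L 0) := by rw [L.fderiv]; exact bL
  have hF : ContDiff ℝ (⊤ : ℕ∞) (fun p => L (f (χ p))) := L.contDiff.comp (hf.comp hχ)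
  have hχv : fderiv ℝ χ 0 (0, 1) = v := by
    have : fderiv ℝ Φ 0 v = (0, 1) := by rw [dΦ, hv, mv]; simp
    rw [← this, d2]
  have c1 : Cond (fun p => jacDet f (χ p)) (0, 1) :=
    Cond.comp hχ χ0 bχ.2 (by rw [hχv]; exact hc)
  have c2 : Cond (jacDet (fun p => L (f (χ p)))) (0, 1) := by
    have su : Sm (fun p => jacDet L (f (χ p)) * jacDet χ p) :=
      ((sm_jac L.contDiff).comp (hf.comp hχ)).mul (sm_jac hχ)
    have := c1.mul su (by
      simp only [χ0, hf0]
      exact mul_ne_zero ((jac_bij _ _).2 bL') ((jac_bij _ _).2 bχ))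
    refine this.congr (sm_jac hF) (Eventually.of_forall fun p => ?_)
    rw [jac_comp (f := L) (g := fun p => f (χ p)) L.differentiableAt (diffOf (hf.comp hχ) p),
      jac_comp (f := f) (g := χ) (diffOf hf _) (diffOf hχ _)]
    ring
  have hnf := normal_form hF (by simp [χ0, hf0]) (by
    filter_upwards [r1] with p hp
    have h := congrArg Prod.fst hp
    exact h) c2
  exact hnf.imp (JetEquiv.of_comp L.contDiff hχ (by simp) χ0 bL' bχ)
    (JetEquiv.of_comp L.contDiff hχ (by simp) χ0 bL' bχ)

lemma jet_of_cond {f : ℝ × ℝ → ℝ × ℝ} (hf : ContDiff ℝ (⊤ : ℕ∞) f) (hf0 : f 0 = 0)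
    (hcr : CorankOne f) {v : ℝ × ℝ} (hv : fderiv ℝ f 0 v = 0) (hv0 : v ≠ 0)
    (hc : Cond (jacDet f) v) :
    JetEquiv 4 f (fun p => (p.1, p.1 ^ 2 * p.2 + p.1 * p.2 ^ 3)) ∨
        JetEquiv 4 f (fun p => (p.1, p.1 ^ 2 * p.2)) := by
  obtain ⟨p₀, hp₀⟩ : ∃ p, fderiv ℝ f 0 p ≠ 0 := by
    by_contra! h
    exact (corank_facts hcr).2 (ContinuousLinearMap.ext h)
  by_cases h1 : (fderiv ℝ f 0 p₀).1 = 0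
  · have h2 : (fderiv ℝ f 0 p₀).2 ≠ 0 := fun h2 => hp₀ (by ext <;> assumption)
    exact jet_of_cond_aux hf hf0 hv hv0 hc
      ((ContinuousLinearEquiv.prodComm ℝ ℝ ℝ : (ℝ × ℝ) ≃L[ℝ] ℝ × ℝ) : ℝ × ℝ →L[ℝ] ℝ × ℝ)
      (ContinuousLinearEquiv.prodComm ℝ ℝ ℝ).bijective (p₀ := p₀) (by simpa using h2)
  · exact jet_of_cond_aux hf hf0 hv hv0 hc (ContinuousLinearMap.id ℝ _) Function.bijective_id
      (p₀ := p₀) (by simpa using h1)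

lemma model_cond (ε : ℝ) :
    let N : ℝ × ℝ → ℝ × ℝ := fun p => (p.1, p.1 ^ 2 * p.2 + ε * (p.1 * p.2 ^ 3))
    ContDiff ℝ (⊤ : ℕ∞) N ∧ Cond (jacDet N) (0, 1) ∧ fderiv ℝ N 0 (0, 1) = 0 := by
  intro N
  have hN : ContDiff ℝ (⊤ : ℕ∞) N := by simp only [N]; fun_prop
  have s2 : Sm (fun p => (N p).2) := hN.snd
  have d2 : ∀ p, dop (0, 1) (fun p => (N p).2) p = p.1 ^ 2 + 3 * ε * p.1 * p.2 ^ 2 := by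
    rintro ⟨x, y⟩
    refine (hasDerivAt_line s2 x y).unique ?_
    have e1 := (hasDerivAt_id y).const_mul (x ^ 2)
    have e3 := (hasDerivAt_pow 3 y).const_mul (ε * x)
    refine HasDerivAt.congr_deriv (HasDerivAt.congr_of_eventuallyEq (e1.add e3)
      (Eventually.of_forall fun t => ?_)) ?_
    · simp [N]; ring
    · simp; ring
  have hj : ∀ p, jacDet N p = p.1 ^ 2 + 3 * ε * p.1 * p.2 ^ 2 := by
    intro p
    rw [jac_eq hN, d2]
    simp only [N, dop_fst]
    ring
  refine ⟨hN, ?_, ?_⟩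
  · refine ⟨ContinuousLinearMap.fst ℝ ℝ ℝ, 1, fun p => 3 * ε * (p.2 * p.2), by simp, ?_, one_ne_zero,
      (vn_snd.mul vn_snd).cmul _, ?_⟩
    · intro h
      have := congrArg (fun m => m (1, 0)) h
      simp at this
    · refine (vn_const_zero 4).eq fun p => ?_
      rw [hj]
      simp
      ring
  · have h := (diffOf hN 0).hasFDerivAt
    ext
    · have h1 := h.fst.fderiv
      have : dop (0, 1) (fun p => (N p).1) 0 = 0 := by simp only [N, dop_fst]
      rw [dop, h1] at this
      exact this
    · have h1 := h.snd.fderiv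
      have : dop (0, 1) (fun p => (N p).2) 0 = 0 := by rw [d2]; simp
      rw [dop, h1] at this
      exact this

theorem stmt18 (f η : ℝ × ℝ → ℝ × ℝ)
    (hf : ContDiff ℝ (⊤ : ℕ∞) f) (hf0 : f 0 = 0) (hcr : CorankOne f)
    (hη : IsNullVF f η) :
    (JetEquiv 4 f (fun p => (p.1, p.1 ^ 2 * p.2 + p.1 * p.2 ^ 3)) ∨
        JetEquiv 4 f (fun p => (p.1, p.1 ^ 2 * p.2))) ↔
      (fderiv ℝ (jacDet f) 0 = 0 ∧ (hess (jacDet f)).rank = 1 ∧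
        etaIter η 2 (jacDet f) 0 = 0 ∧ etaIter η 3 (jacDet f) 0 = 0) := by
  obtain ⟨hη0, U, hU, hηU, hker⟩ := hη
  obtain ⟨η', hη', he⟩ := globalise hU hηU
  have e0 : η' 0 = η 0 := he.self_of_nhds
  have hj0 := (corank_facts hcr).1
  have hk : fderiv ℝ f 0 (η 0) = 0 := hker 0 (mem_of_mem_nhds hU) hj0
  have e2 : etaIter η 2 (jacDet f) 0 = etaIter η' 2 (jacDet f) 0 :=
    (etaIter_congr (jacDet f) he.symm 2).self_of_nhds
  have e3 : etaIter η 3 (jacDet f) 0 = etaIter η' 3 (jacDet f) 0 :=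
    (etaIter_congr (jacDet f) he.symm 3).self_of_nhds
  rw [e2, e3]
  rw [← e0] at hη0 hk
  constructor
  · intro h
    apply Cond.conds hη'
    rcases h with h | h
    · obtain ⟨m1, m2, m3⟩ := model_cond 1
      simp only [one_mul] at m1 m2 m3
      exact cond_of_jet hf hf0 hcr hk m1 m2 m3 h
    · obtain ⟨m1, m2, m3⟩ := model_cond 0
      simp only [zero_mul, add_zero] at m1 m2 m3
      exact cond_of_jet hf hf0 hcr hk m1 m2 m3 h
  · rintro ⟨h1, h2, h3, h4⟩
    exact jet_of_cond hf hf0 hcr hk hη0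
      (Cond.of_conds hη' (sm_jac hf) hj0 hη0 h1 h2 h3 h4)
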